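/- For every α > 0, define H_α(a) = 8 e^{-(2a/α) tan(a/2)} sin²(a/2) on (0, π). Then H_α is continuous and strictly positive, H_α(a) → 0 as a → 0⁺ and as a → π⁻, and H_α attains a finite positive maximum Λ_c(α) at some interior point; moreover, for a given Λ > 0 the equation H_α(a) = Λ has a solution a ∈ (0, π) if and only if Λ ≤ Λ_c(α). -/

import Mathlib

/-!
The only delicate limit is at `π⁻`: there `tan (a / 2) → +∞`, so the exponential factor kills the
bounded factor `sin² (a / 2)`. The rest holds for any continuous `f > c` on an open interval that
tends to `c` at both ends. Near the ends `f` stays below one of its interior values, so compactness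
of the remaining closed subinterval yields a maximum `M`; since `f` also takes values
arbitrarily close to `c` and the interval is connected, the range of `f` is exactly `(c, M]`.
-/

open Real Set Filter

open scoped Topology

section Extrema

variable {X Y : Type*} [TopologicalSpace X] [LinearOrder Y] [TopologicalSpace Y] {f : X → Y}

lemma exists_isMaxOn_Ioo_of_eventually_le [LinearOrder X] [OrderTopology X] [CompactIccSpace X]
    [ClosedIciTopology Y] {l r x₁ : X} (hf : ContinuousOn f (Ioo l r)) (hx₁ : x₁ ∈ Ioo l r)
    (hl : ∀ᶠ x in 𝓝[>] l, f x ≤ f x₁) (hr : ∀ᶠ x in 𝓝[<] r, f x ≤ f x₁) :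
    ∃ x₀ ∈ Ioo l r, IsMaxOn f (Ioo l r) x₀ := by
  obtain ⟨u, ⟨hlu, hux₁⟩, hu⟩ := (mem_nhdsGT_iff_exists_mem_Ioc_Ioo_subset hx₁.1).1 hl
  obtain ⟨v, ⟨hx₁v, hvr⟩, hv⟩ := (mem_nhdsLT_iff_exists_mem_Ico_Ioo_subset hx₁.2).1 hr
  have hsub : Icc u v ⊆ Ioo l r := Icc_subset_Ioo hlu hvr
  obtain ⟨x₀, hx₀, hmax⟩ := isCompact_Icc.exists_isMaxOn ⟨x₁, hux₁, hx₁v⟩ (hf.mono hsub)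
  have hle : ∀ x ∈ Icc u v, f x ≤ f x₀ := isMaxOn_iff.1 hmax
  have hx₁₀ : f x₁ ≤ f x₀ := hle x₁ ⟨hux₁, hx₁v⟩
  refine ⟨x₀, hsub hx₀, fun x hx => ?_⟩
  rcases lt_or_ge x u with hxu | hux
  · exact (hu ⟨hx.1, hxu⟩).trans hx₁₀
  rcases lt_or_ge v x with hvx | hxv
  · exact (hv ⟨hvx, hx.2⟩).trans hx₁₀
  · exact hle x ⟨hux, hxv⟩

lemma image_eq_Ioc_of_isMaxOn [OrderClosedTopology Y] {s : Set X} (hs : IsPreconnected s)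
    (hf : ContinuousOn f s) {p : Filter X} [NeBot p] (hp : p ≤ 𝓟 s) {c : Y}
    (hc : Tendsto f p (𝓝 c)) (hlt : ∀ x ∈ s, c < f x) {x₀ : X} (hx₀ : x₀ ∈ s)
    (hmax : IsMaxOn f s x₀) : f '' s = Ioc c (f x₀) :=
  Subset.antisymm
    (image_subset_iff.2 fun x hx => ⟨hlt x hx, isMaxOn_iff.1 hmax x hx⟩)
    (hs.intermediate_value_Ioc hx₀ hp hf hc)

lemma exists_image_Ioo_eq_Ioc_of_tendsto [ConditionallyCompleteLinearOrder X] [DenselyOrdered X]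
    [OrderTopology X] [OrderClosedTopology Y] {l r : X} {c : Y} (hlr : l < r)
    (hf : ContinuousOn f (Ioo l r)) (hlt : ∀ x ∈ Ioo l r, c < f x)
    (hl : Tendsto f (𝓝[>] l) (𝓝 c)) (hr : Tendsto f (𝓝[<] r) (𝓝 c)) :
    ∃ x₀ ∈ Ioo l r, f '' Ioo l r = Ioc c (f x₀) := by
  obtain ⟨x₁, hx₁⟩ := nonempty_Ioo.2 hlr
  obtain ⟨x₀, hx₀, hmax⟩ := exists_isMaxOn_Ioo_of_eventually_le hf hx₁
    (hl.eventually_le_const (hlt x₁ hx₁)) (hr.eventually_le_const (hlt x₁ hx₁))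
  have : NeBot (𝓝[>] l) := nhdsGT_neBot_of_exists_gt ⟨r, hlr⟩
  have hle : 𝓝[>] l ≤ 𝓟 (Ioo l r) := le_principal_iff.2 (Ioo_mem_nhdsGT hlr)
  exact ⟨x₀, hx₀, image_eq_Ioc_of_isMaxOn isPreconnected_Ioo hf hle hl hlt hx₀ hmax⟩

end Extrema

lemma tendsto_tan_half_nhdsLT_pi : Tendsto (fun a : ℝ => tan (a / 2)) (𝓝[<] π) atTop := by
  have hhalf : Tendsto (fun a : ℝ => a / 2) (𝓝[<] π) (𝓝[<] (π / 2)) :=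
    ContinuousWithinAt.tendsto_nhdsWithin (by fun_prop)
      fun _ ha => mem_Iio.2 (div_lt_div_of_pos_right (mem_Iio.1 ha) two_pos)
  exact tendsto_tan_pi_div_two.comp hhalf

/-- The heating function `H_α`: the voltage-controlled axial problem with boundary parameter `α` has
the steady state `2 ln (cos (a z) / cos (a / 2)) + (2 a / α) tan (a / 2)` at the heating parameter
`axialHeating α a`. It is a total function of `a`, meaningful for `α > 0` and `a ∈ (0, π)`. -/
noncomputable def axialHeating (α a : ℝ) : ℝ :=
  8 * exp (-(2 * a / α) * tan (a / 2)) * sin (a / 2) ^ 2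

namespace axialHeating

variable {α a : ℝ}

lemma continuousAt (ha : cos (a / 2) ≠ 0) : ContinuousAt (axialHeating α) a := by
  have htan : ContinuousAt (fun x : ℝ => tan (x / 2)) a :=
    (continuousAt_tan.2 ha).comp (f := fun x : ℝ => x / 2) (by fun_prop)
  unfold axialHeating
  fun_prop

lemma continuousOn_Ioo : ContinuousOn (axialHeating α) (Ioo (-π) π) := fun a ha =>
  have hcos : 0 < cos (a / 2) :=
    cos_pos_of_mem_Ioo ⟨by linarith [ha.1], by linarith [ha.2]⟩
  (continuousAt hcos.ne').continuousWithinAt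

lemma pos (ha : sin (a / 2) ≠ 0) : 0 < axialHeating α a := by
  unfold axialHeating
  positivity

lemma tendsto_nhds_zero : Tendsto (axialHeating α) (𝓝 0) (𝓝 0) := by
  have h : ContinuousAt (axialHeating α) 0 := continuousAt (by simp)
  simpa [ContinuousAt, axialHeating] using h

lemma tendsto_nhdsLT_pi (hα : 0 < α) : Tendsto (axialHeating α) (𝓝[<] π) (𝓝 0) := by
  have hcoef : Tendsto (fun a : ℝ => -(2 * a / α)) (𝓝[<] π) (𝓝 (-(2 * π / α))) :=
    (Continuous.tendsto (by fun_prop) π).mono_left nhdsWithin_le_nhds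
  have hneg : -(2 * π / α) < 0 := neg_lt_zero.2 (by positivity)
  have hexp : Tendsto (fun a : ℝ => exp (-(2 * a / α) * tan (a / 2))) (𝓝[<] π) (𝓝 0) :=
    tendsto_exp_atBot.comp (hcoef.neg_mul_atTop hneg tendsto_tan_half_nhdsLT_pi)
  have hsin : Tendsto (fun a : ℝ => sin (a / 2) ^ 2) (𝓝[<] π) (𝓝 (sin (π / 2) ^ 2)) :=
    (Continuous.tendsto (by fun_prop) π).mono_left nhdsWithin_le_nhds
  have hprod := (hexp.const_mul 8).mul hsin
  rw [mul_zero, zero_mul] at hprod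
  exact hprod

end axialHeating

/-- For α > 0, H_α(a) = 8 e^{-(2a/α) tan(a/2)} sin²(a/2) is continuous and
strictly positive on (0, π), tends to 0 at both endpoints, attains a finite positive
maximum Λ_c(α) at an interior point, and for Λ > 0 the equation H_α(a) = Λ has a
solution a ∈ (0, π) iff Λ ≤ Λ_c(α). -/
theorem axial_critical_Lambda (α : ℝ) (hα : 0 < α)
    (H : ℝ → ℝ)
    (hH : ∀ a : ℝ,
      H a = 8 * Real.exp (-(2 * a / α) * Real.tan (a / 2)) * Real.sin (a / 2) ^ 2) :
    ContinuousOn H (Set.Ioo 0 Real.pi) ∧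
    (∀ a ∈ Set.Ioo 0 Real.pi, 0 < H a) ∧
    Filter.Tendsto H (nhdsWithin 0 (Set.Ioi 0)) (nhds 0) ∧
    Filter.Tendsto H (nhdsWithin Real.pi (Set.Iio Real.pi)) (nhds 0) ∧
    ∃ a₀ ∈ Set.Ioo 0 Real.pi,
      0 < H a₀ ∧
      (∀ a ∈ Set.Ioo 0 Real.pi, H a ≤ H a₀) ∧
      (∀ Λ : ℝ, 0 < Λ → ((∃ a ∈ Set.Ioo 0 Real.pi, H a = Λ) ↔ Λ ≤ H a₀)) := by
  obtain rfl : H = axialHeating α := funext hH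
  have hcont : ContinuousOn (axialHeating α) (Ioo 0 π) :=
    axialHeating.continuousOn_Ioo.mono (Ioo_subset_Ioo_left (neg_nonpos.2 pi_pos.le))
  have hpos : ∀ a ∈ Ioo 0 π, 0 < axialHeating α a := fun a ha =>
    axialHeating.pos
      (sin_pos_of_pos_of_lt_pi (by linarith [ha.1]) (by linarith [ha.1, ha.2])).ne'
  have hzero : Tendsto (axialHeating α) (𝓝[>] 0) (𝓝 0) :=
    axialHeating.tendsto_nhds_zero.mono_left nhdsWithin_le_nhds
  have hpi : Tendsto (axialHeating α) (𝓝[<] π) (𝓝 0) := axialHeating.tendsto_nhdsLT_pi hα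
  obtain ⟨a₀, ha₀, himage⟩ := exists_image_Ioo_eq_Ioc_of_tendsto pi_pos hcont hpos hzero hpi
  have hrange : ∀ Λ : ℝ, (∃ a ∈ Ioo 0 π, axialHeating α a = Λ) ↔ 0 < Λ ∧ Λ ≤ axialHeating α a₀ :=
    Set.ext_iff.1 himage
  exact ⟨hcont, hpos, hzero, hpi, a₀, ha₀, hpos a₀ ha₀,
    fun a ha => ((hrange _).1 ⟨a, ha, rfl⟩).2,
    fun Λ hΛ => (hrange Λ).trans (and_iff_right hΛ)⟩
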